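/- Let G be a unicyclic graph of order n with n ≥ 3. Then the number φ(G) of maximal dissociation sets of G satisfies φ(G) ≥ ⌊n/2⌋ + 2. -/

import Mathlib

open SimpleGraph

/-- A dissociation set: a set of vertices inducing a subgraph of maximum degree at most 1,
i.e., every vertex of `S` has at most one neighbour inside `S`. -/
def IsDissoc {V : Type*} (G : SimpleGraph V) (S : Set V) : Prop :=
  ∀ v ∈ S, {u | u ∈ S ∧ G.Adj v u}.Subsingleton

/-- A maximal dissociation set: a dissociation set not properly contained in another one. -/
def IsMaxDissoc {V : Type*} (G : SimpleGraph V) (S : Set V) : Prop :=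
  IsDissoc G S ∧ ∀ T : Set V, IsDissoc G T → S ⊆ T → S = T

/-- `phi G` is the number of maximal dissociation sets of `G`. -/
noncomputable def phi {V : Type*} (G : SimpleGraph V) : ℕ :=
  {S : Set V | IsMaxDissoc G S}.ncard

/-- The number of maximal dissociation sets of `G` not containing `u`. -/
noncomputable def phiNot {V : Type*} (G : SimpleGraph V) (u : V) : ℕ :=
  {S : Set V | IsMaxDissoc G S ∧ u ∉ S}.ncard

/-- The number of maximal dissociation sets `S` of `G` with `u ∈ S` and
`u` of degree 0 in the subgraph induced by `S`. -/
noncomputable def phi0 {V : Type*} (G : SimpleGraph V) (u : V) : ℕ :=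
  {S : Set V | IsMaxDissoc G S ∧ u ∈ S ∧ ∀ x ∈ S, ¬ G.Adj u x}.ncard

/-- The number of maximal dissociation sets `S` of `G` with `u ∈ S` and
`u` of degree 1 in the subgraph induced by `S`. -/
noncomputable def phi1 {V : Type*} (G : SimpleGraph V) (u : V) : ℕ :=
  {S : Set V | IsMaxDissoc G S ∧ u ∈ S ∧ ∃! x, x ∈ S ∧ G.Adj u x}.ncard

/-- A unicyclic graph: a connected graph whose number of edges equals its number of vertices
(equivalently, a connected graph with exactly one cycle). -/
def IsUnicyclic {V : Type*} [Fintype V] (G : SimpleGraph V) : Prop :=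
  G.Connected ∧ G.edgeSet.ncard = Fintype.card V

/-- The tree `T(p,q)` (for `q ≤ p`): obtained from the star `K_{1,p}` by subdividing
exactly `q` of its edges.  The centre is `Sum.inl ()`, the `p` neighbours of the centre are
`Sum.inr (Sum.inl i)`, and for `j < q` the vertex `Sum.inr (Sum.inr j)` is the subdivision
pendant attached to the `j`-th neighbour.  It has `1 + p + q` vertices. -/
def treeT (p q : ℕ) (h : q ≤ p) : SimpleGraph (Unit ⊕ Fin p ⊕ Fin q) :=
  SimpleGraph.fromRel fun a b =>
    (∃ i : Fin p, a = Sum.inl () ∧ b = Sum.inr (Sum.inl i)) ∨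
    (∃ j : Fin q, a = Sum.inr (Sum.inl (Fin.castLE h j)) ∧ b = Sum.inr (Sum.inr j))

/-- The unicyclic graph `U(p,q)` (for `q ≤ p`): obtained by identifying one vertex of the
triangle `K₃` with the centre of `T(p,q)`.  The centre is `Sum.inl ()`, the two other triangle
vertices are `Sum.inr (Sum.inl 0)` and `Sum.inr (Sum.inl 1)`, and the copy of `T(p,q)` sits on
the remaining vertices.  It has `3 + p + q` vertices. -/
def graphU (p q : ℕ) (h : q ≤ p) : SimpleGraph (Unit ⊕ Fin 2 ⊕ Fin p ⊕ Fin q) :=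
  SimpleGraph.fromRel fun a b =>
    (a = Sum.inl () ∧ b = Sum.inr (Sum.inl 0)) ∨
    (a = Sum.inl () ∧ b = Sum.inr (Sum.inl 1)) ∨
    (a = Sum.inr (Sum.inl 0) ∧ b = Sum.inr (Sum.inl 1)) ∨
    (∃ i : Fin p, a = Sum.inl () ∧ b = Sum.inr (Sum.inr (Sum.inl i))) ∨
    (∃ j : Fin q, a = Sum.inr (Sum.inr (Sum.inl (Fin.castLE h j))) ∧
      b = Sum.inr (Sum.inr (Sum.inr j)))

/-- The unicyclic graph obtained from the cycle `C_r` by attaching one pendant vertex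
`Sum.inr j` to the cycle vertex `Sum.inl (f j)` for each `j : Fin t`.  For injective `f`
this is a member of the class `𝒰_{r,t}`. -/
def graphUrtF (r t : ℕ) (f : Fin t → Fin r) : SimpleGraph (Fin r ⊕ Fin t) :=
  SimpleGraph.fromRel fun a b =>
    (∃ i j : Fin r, a = Sum.inl i ∧ b = Sum.inl j ∧ (cycleGraph r).Adj i j) ∨
    (∃ j : Fin t, a = Sum.inl (f j) ∧ b = Sum.inr j)

/-- The canonical member `U_{r,t}` of `𝒰_{r,t}` (for `t ≤ r`): the cycle `C_r` with one
pendant vertex attached to each of its first `t` vertices. -/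
def graphUrt (r t : ℕ) (h : t ≤ r) : SimpleGraph (Fin r ⊕ Fin t) :=
  graphUrtF r t (Fin.castLE h)

/-- A caterpillar: a tree in which deleting all vertices of degree 1 leaves a path. -/
def IsCaterpillar {V : Type*} [Fintype V] (G : SimpleGraph V) : Prop :=
  G.IsTree ∧ ∃ m : ℕ,
    Nonempty ((G.induce {v | 2 ≤ (G.neighborSet v).ncard}) ≃g SimpleGraph.pathGraph m)

/-- The graph `G₁` obtained from `U` by adding `k` new pendant vertices
`v₁ = Sum.inr 0, …, v_k = Sum.inr (k-1)`, each adjacent to `w`. -/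
def addPendants {V : Type*} (U : SimpleGraph V) (w : V) (k : ℕ) : SimpleGraph (V ⊕ Fin k) :=
  SimpleGraph.fromRel fun a b =>
    (∃ x y, a = Sum.inl x ∧ b = Sum.inl y ∧ U.Adj x y) ∨
    (∃ j : Fin k, a = Sum.inl w ∧ b = Sum.inr j)

/-- The graph `G₂ = G₁ - w v_k + v₁ v_k`: obtained from `U` by attaching the pendant vertices
`v₁, …, v_{k-1}` to `w` and the vertex `v_k` to `v₁`. -/
def swapPendant {V : Type*} (U : SimpleGraph V) (w : V) (k : ℕ) : SimpleGraph (V ⊕ Fin k) :=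
  SimpleGraph.fromRel fun a b =>
    (∃ x y, a = Sum.inl x ∧ b = Sum.inl y ∧ U.Adj x y) ∨
    (∃ j : Fin k, j.val < k - 1 ∧ a = Sum.inl w ∧ b = Sum.inr j) ∨
    (∃ j₀ j₁ : Fin k, j₀.val = 0 ∧ j₁.val = k - 1 ∧ a = Sum.inr j₀ ∧ b = Sum.inr j₁)

/-- The graph obtained from `H` by attaching a pendant path of length 2 at `w`:
two new vertices `v = Sum.inr 0` and `u = Sum.inr 1` with edges `w v` and `v u`. -/
def addPath2 {V : Type*} (H : SimpleGraph V) (w : V) : SimpleGraph (V ⊕ Fin 2) :=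
  SimpleGraph.fromRel fun a b =>
    (∃ x y, a = Sum.inl x ∧ b = Sum.inl y ∧ H.Adj x y) ∨
    (a = Sum.inl w ∧ b = Sum.inr 0) ∨
    (a = Sum.inr 0 ∧ b = Sum.inr 1)

/-!
The bound `φ ≥ e - ⌈n / 2⌉ + 2` holds for every pseudoforest with `n` vertices and `e > n / 2`
edges. The proof is an induction on `n`, since induced subgraphs of pseudoforests are pseudoforests.

Deleting an isolated vertex is harmless. At a leaf `v` with neighbour `u`, each maximal dissociation
set of `G - u - v` extends to one of `G` containing `v`, while the pairs `{u, y}` with `y ≠ v` a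
neighbour of `u` extend to pairwise distinct ones avoiding `v`; this makes up for the lost edges.
If `G - u - v` has too few edges for the induction, then the degree of `u` is so large that the sets
containing `u` and one of its neighbours, and one set avoiding `u`, suffice.

Otherwise the graph is a disjoint union of cycles. For an induced subgraph `H` of `G`, distinct
maximal dissociation sets of `H` extend to distinct ones of `G`, and none of these extensions has a
trace on `H` that fails to be maximal. So it suffices to find two maximal dissociation sets of `G`
whose trace is not maximal. Take `H = G - b` if the cycle through `b` has length at most 5, and
`H = G - b - c` with `c` a neighbour of `b` if it is longer.
-/

section Dissociation

variable {V : Type*} {G : SimpleGraph V}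

theorem IsDissoc.mono {A B : Set V} (hB : IsDissoc G B) (h : A ⊆ B) : IsDissoc G A :=
  fun v hv _ hx _ hy => hB v (h hv) ⟨h hx.1, hx.2⟩ ⟨h hy.1, hy.2⟩

theorem IsDissoc.eq_of_adj {A : Set V} (hA : IsDissoc G A) {v x y : V} (hv : v ∈ A) (hx : x ∈ A)
    (hy : y ∈ A) (hvx : G.Adj v x) (hvy : G.Adj v y) : x = y :=
  hA v hv ⟨hx, hvx⟩ ⟨hy, hvy⟩

theorem isDissoc_empty : IsDissoc G ∅ := fun _ h => h.elim

theorem IsDissoc.insert {A : Set V} (hA : IsDissoc G A) {a e : V}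
    (ha : ∀ x ∈ A, G.Adj a x → x = e) (he : e ∈ A → ∀ x ∈ A, ¬ G.Adj e x) :
    IsDissoc G (insert a A) := by
  rintro v (rfl | hv) x ⟨rfl | hx, hvx⟩ y ⟨rfl | hy, hvy⟩
  · rfl
  · exact (G.irrefl hvx).elim
  · exact (G.irrefl hvy).elim
  · rw [ha x hx hvx, ha y hy hvy]
  · rfl
  · obtain rfl := ha v hv hvx.symm
    exact (he hv y hy hvy).elim
  · obtain rfl := ha v hv hvy.symm
    exact (he hv x hx hvx).elim
  · exact hA.eq_of_adj hv hx hy hvx hvy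

theorem IsDissoc.insert_of_forall_not_adj {A : Set V} (hA : IsDissoc G A) {a : V}
    (ha : ∀ x ∈ A, ¬ G.Adj a x) : IsDissoc G (Insert.insert a A) :=
  hA.insert (e := a) (fun x hx h => (ha x hx h).elim) fun _ => ha

theorem isDissoc_pair (u v : V) : IsDissoc G {u, v} := by
  have hv : IsDissoc G {v} := by
    simpa using (isDissoc_empty (G := G)).insert_of_forall_not_adj (a := v) (by simp)
  exact hv.insert (e := v) (by simp) (by simp)

end Dissociation

section InducedSubgraph

open Finset

variable {V : Type*}

open Classical in
/-- The maximal dissociation sets of the subgraph of `G` induced by `S`, as sets of vertices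
of `G`; their number is `φ(G[S])`. -/
noncomputable def maxDissoc (G : SimpleGraph V) (S : Finset V) : Finset (Finset V) :=
  {T ∈ S.powerset | Maximal (fun A : Finset V => A ⊆ S ∧ IsDissoc G (A : Set V)) T}

open Classical in
/-- The neighbourhood of `v` in the subgraph of `G` induced by `S`. -/
noncomputable def nbrIn (G : SimpleGraph V) (S : Finset V) (v : V) : Finset V :=
  {w ∈ S | G.Adj v w}

/-- The degree sum of the subgraph of `G` induced by `S`, that is, twice its number of edges. -/
noncomputable def degSum (G : SimpleGraph V) (S : Finset V) : ℕ :=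
  ∑ v ∈ S, #(nbrIn G S v)

variable {G : SimpleGraph V} {S H T : Finset V} {u v w : V}

theorem mem_maxDissoc :
    T ∈ maxDissoc G S ↔ Maximal (fun A : Finset V => A ⊆ S ∧ IsDissoc G (A : Set V)) T := by
  simpa [maxDissoc] using fun h => h.prop.1

theorem subset_of_mem_maxDissoc (hT : T ∈ maxDissoc G S) : T ⊆ S :=
  (mem_maxDissoc.1 hT).prop.1

theorem isDissoc_of_mem_maxDissoc (hT : T ∈ maxDissoc G S) : IsDissoc G (T : Set V) :=
  (mem_maxDissoc.1 hT).prop.2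

theorem exists_mem_maxDissoc_superset {A : Finset V} (hAS : A ⊆ S) (hA : IsDissoc G (A : Set V)) :
    ∃ T ∈ maxDissoc G S, A ⊆ T := by
  obtain ⟨T, hAT, hT⟩ := (S.powerset.finite_toSet.subset fun B hB => by
    simpa using hB.1 : {B : Finset V | B ⊆ S ∧ IsDissoc G (B : Set V)}.Finite).exists_le_maximal
      ⟨hAS, hA⟩
  exact ⟨T, mem_maxDissoc.2 hT, hAT⟩

theorem exists_mem_maxDissoc_pair (hu : u ∈ S) (hv : v ∈ S) :
    ∃ T ∈ maxDissoc G S, u ∈ T ∧ v ∈ T := by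
  classical
  obtain ⟨T, hT, hsub⟩ := exists_mem_maxDissoc_superset (G := G) (S := S) (A := {u, v})
    (by simp [insert_subset_iff, hu, hv]) (by simpa using isDissoc_pair u v)
  exact ⟨T, hT, hsub (by simp), hsub (by simp)⟩

theorem inter_eq_of_mem_maxDissoc_of_subset [DecidableEq V] {R : Finset V}
    (hR : R ∈ maxDissoc G H) (hT : IsDissoc G (T : Set V)) (hRT : R ⊆ T) : T ∩ H = R :=
  ((mem_maxDissoc.1 hR).eq_of_le ⟨inter_subset_right, hT.mono (by simp)⟩
    (subset_inter hRT (subset_of_mem_maxDissoc hR))).symm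

theorem inter_notMem_maxDissoc [DecidableEq V] {a e : V} (haH : a ∈ H) (haT : a ∉ T)
    (ha : ∀ x ∈ T ∩ H, G.Adj a x → x = e) (he : e ∈ T ∩ H → ∀ x ∈ T ∩ H, ¬ G.Adj e x) :
    T ∩ H ∉ maxDissoc G H := by
  intro hmax
  have hins : IsDissoc G ((insert a (T ∩ H) : Finset V) : Set V) := by
    rw [coe_insert]
    exact (isDissoc_of_mem_maxDissoc hmax).insert ha he
  have heq := (mem_maxDissoc.1 hmax).eq_of_le
    ⟨insert_subset haH inter_subset_right, hins⟩ (subset_insert _ _)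
  exact haT (mem_inter.1 (heq ▸ mem_insert_self a _)).1

/-! ### Comparing `φ(G[H])` and `φ(G[S])` -/

/- A maximal dissociation set of `G[H]` is the trace on `H` of each of its extensions, so distinct
ones have distinct extensions. -/
theorem card_maxDissoc_add_card_le (P : Finset V → Prop)
    (hP : ∀ R ∈ maxDissoc G H, ∃ T ∈ maxDissoc G S, R ⊆ T ∧ P T) {X : Finset (Finset V)}
    (hX : ∀ T ∈ X, T ∈ maxDissoc G S ∧ ¬ P T) :
    #(maxDissoc G H) + #X ≤ #(maxDissoc G S) := by
  classical
  have hH : #(maxDissoc G H) ≤ #{T ∈ maxDissoc G S | P T} := by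
    refine card_le_card_of_forall_subsingleton (· ⊆ ·) (fun R hR => ?_) ?_
    · obtain ⟨T, hT, hRT, hPT⟩ := hP R hR
      exact ⟨T, mem_filter.2 ⟨hT, hPT⟩, hRT⟩
    · rintro T hT R ⟨hR, hRT⟩ R' ⟨hR', hRT'⟩
      have hTd := isDissoc_of_mem_maxDissoc (mem_filter.1 hT).1
      rw [← inter_eq_of_mem_maxDissoc_of_subset hR hTd hRT,
        inter_eq_of_mem_maxDissoc_of_subset hR' hTd hRT']
  have hX' : X ⊆ {T ∈ maxDissoc G S | ¬ P T} := fun T hT => mem_filter.2 (hX T hT)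
  calc #(maxDissoc G H) + #X
      ≤ #{T ∈ maxDissoc G S | P T} + #{T ∈ maxDissoc G S | ¬ P T} :=
        add_le_add hH (card_le_card hX')
    _ = #(maxDissoc G S) := card_filter_add_card_filter_not P

theorem card_maxDissoc_add_card_le_of_inter_notMem [DecidableEq V] (hHS : H ⊆ S)
    {X : Finset (Finset V)} (hX : ∀ T ∈ X, T ∈ maxDissoc G S ∧ T ∩ H ∉ maxDissoc G H) :
    #(maxDissoc G H) + #X ≤ #(maxDissoc G S) := by
  refine card_maxDissoc_add_card_le (fun T => T ∩ H ∈ maxDissoc G H) (fun R hR => ?_) hX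
  obtain ⟨T, hT, hRT⟩ := exists_mem_maxDissoc_superset
    ((subset_of_mem_maxDissoc hR).trans hHS) (isDissoc_of_mem_maxDissoc hR)
  refine ⟨T, hT, hRT, ?_⟩
  rwa [inter_eq_of_mem_maxDissoc_of_subset hR (isDissoc_of_mem_maxDissoc hT) hRT]

theorem card_maxDissoc_mono (h : H ⊆ S) : #(maxDissoc G H) ≤ #(maxDissoc G S) := by
  classical
  simpa using card_maxDissoc_add_card_le_of_inter_notMem (G := G) h (X := ∅) (by simp)

/-! ### Degrees in induced subgraphs -/

theorem mem_nbrIn : w ∈ nbrIn G S v ↔ w ∈ S ∧ G.Adj v w := by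
  simp [nbrIn]

theorem nbrIn_erase [DecidableEq V] : nbrIn G (S.erase v) w = (nbrIn G S w).erase v := by
  ext
  simp [mem_nbrIn, and_assoc]

theorem degSum_eq_degSum_erase_add [DecidableEq V] (hv : v ∈ S) :
    degSum G S = degSum G (S.erase v) + 2 * #(nbrIn G S v) := by
  classical
  have hnbr (w : V) :
      #(nbrIn G S w) = #(nbrIn G (S.erase v) w) + if G.Adj v w then 1 else 0 := by
    rw [nbrIn_erase]
    split_ifs with h
    · exact (card_erase_add_one (mem_nbrIn.2 ⟨hv, h.symm⟩)).symm
    · rw [erase_eq_of_notMem fun h' => h (mem_nbrIn.1 h').2.symm, add_zero]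
  have hself : nbrIn G S v = {w ∈ S.erase v | G.Adj v w} := by
    ext w
    simp only [mem_nbrIn, mem_filter, mem_erase]
    exact ⟨fun h => ⟨⟨h.2.ne.symm, h.1⟩, h.2⟩, fun h => ⟨h.1.2, h.2⟩⟩
  calc degSum G S = #(nbrIn G S v) + ∑ w ∈ S.erase v, #(nbrIn G S w) :=
        (add_sum_erase S _ hv).symm
    _ = #(nbrIn G S v) + (degSum G (S.erase v) + #(nbrIn G S v)) := by
        simp only [hnbr (_ : V), sum_add_distrib, ← card_filter, ← hself, degSum]
    _ = degSum G (S.erase v) + 2 * #(nbrIn G S v) := by ring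

theorem card_le_card_filter_maxDissoc [DecidableEq V] {Y : Finset V} (hu : u ∈ S)
    (hY : Y ⊆ nbrIn G S u) :
    #Y ≤ #{T ∈ maxDissoc G S | u ∈ T ∧ ∃ y ∈ Y, y ∈ T} := by
  refine card_le_card_of_forall_subsingleton (· ∈ ·) (fun y hy => ?_) ?_
  · obtain ⟨T, hT, huT, hyT⟩ := exists_mem_maxDissoc_pair (G := G) hu (mem_nbrIn.1 (hY hy)).1
    exact ⟨T, mem_filter.2 ⟨hT, huT, y, hy, hyT⟩, hyT⟩
  · rintro T hT x ⟨hx, hxT⟩ y ⟨hy, hyT⟩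
    obtain ⟨hT, huT, -⟩ := mem_filter.1 hT
    exact (isDissoc_of_mem_maxDissoc hT).eq_of_adj huT hxT hyT (mem_nbrIn.1 (hY hx)).2
      (mem_nbrIn.1 (hY hy)).2

theorem card_nbrIn_lt_card_maxDissoc (hu : u ∈ S) (hd : 2 ≤ #(nbrIn G S u)) :
    #(nbrIn G S u) < #(maxDissoc G S) := by
  classical
  obtain ⟨x, hx, y, hy, hxy⟩ := one_lt_card.1 hd
  obtain ⟨hxS, hux⟩ := mem_nbrIn.1 hx
  obtain ⟨hyS, huy⟩ := mem_nbrIn.1 hy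
  obtain ⟨T, hT, hxT, hyT⟩ := exists_mem_maxDissoc_pair (G := G) hxS hyS
  have huT : u ∉ T := fun h => hxy ((isDissoc_of_mem_maxDissoc hT).eq_of_adj h hxT hyT hux huy)
  exact (card_le_card_filter_maxDissoc hu subset_rfl).trans_lt
    (card_lt_card (filter_ssubset.2 ⟨T, hT, fun h => huT h.1⟩))

theorem card_maxDissoc_erase_leaf_add_card_le [DecidableEq V] (hv : v ∈ S)
    (hleaf : nbrIn G S v = {u}) :
    #(maxDissoc G ((S.erase v).erase u)) + #(nbrIn G (S.erase v) u) ≤ #(maxDissoc G S) := by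
  obtain ⟨hu, hvu⟩ := mem_nbrIn.1 (hleaf ▸ mem_singleton_self u)
  refine (Nat.add_le_add_left (card_le_card_filter_maxDissoc (S := S) hu
    (nbrIn_erase (G := G) ▸ erase_subset _ _)) _).trans
      (card_maxDissoc_add_card_le (v ∈ ·) (fun R hR => ?_) fun T hT => ?_)
  · have hRS := subset_of_mem_maxDissoc hR
    have hvR : ∀ x ∈ R, ¬ G.Adj v x := fun x hx hvx =>
      have hxu : x ∈ ({u} : Finset V) :=
        hleaf ▸ mem_nbrIn.2 ⟨mem_of_mem_erase (mem_of_mem_erase (hRS hx)), hvx⟩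
      ne_of_mem_erase (hRS hx) (mem_singleton.1 hxu)
    obtain ⟨T, hT, hsub⟩ := exists_mem_maxDissoc_superset (S := S) (A := insert v R)
      (insert_subset hv (hRS.trans ((erase_subset _ _).trans (erase_subset _ _))))
      (by simpa using (isDissoc_of_mem_maxDissoc hR).insert_of_forall_not_adj hvR)
    exact ⟨T, hT, (subset_insert _ _).trans hsub, hsub (mem_insert_self v R)⟩
  · obtain ⟨hT, huT, y, hy, hyT⟩ := mem_filter.1 hT
    obtain ⟨hyS, huy⟩ := mem_nbrIn.1 hy
    exact ⟨hT, fun hvT => ne_of_mem_erase hyS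
      ((isDissoc_of_mem_maxDissoc hT).eq_of_adj huT hyT hvT huy hvu.symm)⟩

/-! ### The edge bound -/

/-- The lower bound `φ(G[S]) ≥ e - ⌈|S| / 2⌉ + 2`, where `e` is the number of edges of `G[S]`,
in case `e > |S| / 2`. It is the induction hypothesis of the argument, and it is doubled and
rearranged to avoid truncated operations on `degSum G S = 2 * e`. -/
def EdgeBound (G : SimpleGraph V) (S : Finset V) : Prop :=
  #S < degSum G S → degSum G S + 4 ≤ 2 * #(maxDissoc G S) + 2 * ((#S + 1) / 2)

theorem EdgeBound.of_erase_isolated [DecidableEq V] (hv : v ∈ S) (hiso : #(nbrIn G S v) = 0)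
    (h : EdgeBound G (S.erase v)) : EdgeBound G S := by
  intro hS
  have hdeg := degSum_eq_degSum_erase_add (G := G) hv
  have hcard := card_erase_add_one hv
  have hmono := card_maxDissoc_mono (G := G) (erase_subset v S)
  have := h (by omega)
  omega

theorem EdgeBound.of_erase_leaf [DecidableEq V] (hv : v ∈ S) (hleaf : nbrIn G S v = {u})
    (h : EdgeBound G ((S.erase v).erase u)) : EdgeBound G S := by
  intro hS
  obtain ⟨hu, hvu⟩ := mem_nbrIn.1 (hleaf ▸ mem_singleton_self u)
  have huS : u ∈ S.erase v := mem_erase.2 ⟨hvu.ne.symm, hu⟩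
  have hdegv := degSum_eq_degSum_erase_add (G := G) hv
  have hdegu := degSum_eq_degSum_erase_add (G := G) huS
  have hcardv := card_erase_add_one hv
  have hcardu := card_erase_add_one huS
  rw [hleaf, card_singleton] at hdegv
  by_cases hH : #((S.erase v).erase u) < degSum G ((S.erase v).erase u)
  · have := h hH
    have := card_maxDissoc_erase_leaf_add_card_le hv hleaf
    omega
  · have hnbr : #(nbrIn G S u) = #(nbrIn G (S.erase v) u) + 1 := by
      rw [nbrIn_erase, card_erase_add_one (mem_nbrIn.2 ⟨hv, hvu.symm⟩)]
    have := card_nbrIn_lt_card_maxDissoc (G := G) hu (by omega)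
    omega

/-! ### Disjoint unions of cycles -/

/-- The subgraph of `G` induced by `S` is 2-regular, that is, a disjoint union of cycles. -/
def IsTwoRegularOn (G : SimpleGraph V) (S : Finset V) : Prop :=
  ∀ v ∈ S, #(nbrIn G S v) = 2

/-- The distance of `u` and `v` in the subgraph of `G` induced by `S` is at most 2. For the ends
of a path on four vertices in a disjoint union of cycles, this singles out the cycles of length
at most 5. -/
def IsNearIn (G : SimpleGraph V) (S : Finset V) (u v : V) : Prop :=
  u = v ∨ G.Adj u v ∨ ∃ w ∈ S, G.Adj u w ∧ G.Adj w v

theorem IsNearIn.symm (h : IsNearIn G S u v) : IsNearIn G S v u := by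
  rcases h with rfl | h | ⟨w, hw, huw, hwv⟩
  · exact .inl rfl
  · exact .inr (.inl h.symm)
  · exact .inr (.inr ⟨w, hw, hwv.symm, huw.symm⟩)

theorem adj_iff_of_nbrIn_eq_pair [DecidableEq V] {x y : V} (h : nbrIn G S v = {x, y}) (hw : w ∈ S) :
    G.Adj v w ↔ w = x ∨ w = y := by
  simpa [mem_nbrIn, hw] using Finset.ext_iff.1 h w

theorem mem_and_adj_of_nbrIn_eq_pair [DecidableEq V] {x y : V} (h : nbrIn G S v = {x, y}) :
    (x ∈ S ∧ G.Adj v x) ∧ y ∈ S ∧ G.Adj v y := by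
  simp only [← mem_nbrIn, h, mem_insert_self, mem_insert_of_mem, mem_singleton, and_self]

theorem isDissoc_of_not_isNearIn [DecidableEq V] {a b c d p q r : V}
    (hNq : nbrIn G S q = {p, r}) (hNp : nbrIn G S p = {a, q}) (hNa : nbrIn G S a = {b, p})
    (hNb : nbrIn G S b = {a, c}) (hNc : nbrIn G S c = {b, d}) (hnear : ¬ IsNearIn G S a d) :
    IsDissoc G {b, p, r, d} := by
  obtain ⟨-, hr, hqr⟩ := mem_and_adj_of_nbrIn_eq_pair hNq
  obtain ⟨-, hq, hpq⟩ := mem_and_adj_of_nbrIn_eq_pair hNp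
  obtain ⟨-, hp, hap⟩ := mem_and_adj_of_nbrIn_eq_pair hNa
  obtain ⟨⟨ha, hba⟩, -⟩ := mem_and_adj_of_nbrIn_eq_pair hNb
  obtain ⟨-, hd, hcd⟩ := mem_and_adj_of_nbrIn_eq_pair hNc
  have had : a ≠ d := fun h => hnear (.inl h)
  have hpd : ¬ G.Adj p d := fun h => hnear (.inr (.inr ⟨p, hp, hap, h⟩))
  have hpc : p ≠ c := by
    rintro rfl
    exact ((adj_iff_of_nbrIn_eq_pair hNc ha).1 hap.symm).elim hba.ne.symm had
  have hbp : ¬ G.Adj b p := fun h =>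
    ((adj_iff_of_nbrIn_eq_pair hNb hp).1 h).elim hap.ne.symm hpc
  have hqb : q ≠ b := fun h => hbp (h ▸ hpq.symm)
  have hra : r ≠ a := by
    rintro rfl
    exact ((adj_iff_of_nbrIn_eq_pair hNa hq).1 hqr.symm).elim hqb hpq.ne.symm
  have hrc : r ≠ c := by
    rintro rfl
    exact ((adj_iff_of_nbrIn_eq_pair hNc hq).1 hqr.symm).elim hqb fun h => hpd (h ▸ hpq)
  have hbr : ¬ G.Adj b r := fun h => ((adj_iff_of_nbrIn_eq_pair hNb hr).1 h).elim hra hrc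
  have hbd : ¬ G.Adj b d := fun h =>
    ((adj_iff_of_nbrIn_eq_pair hNb hd).1 h).elim had.symm hcd.ne.symm
  have hpr : ¬ G.Adj p r := fun h =>
    ((adj_iff_of_nbrIn_eq_pair hNp hr).1 h).elim hra hqr.ne.symm
  refine ((isDissoc_pair r d).insert_of_forall_not_adj ?_).insert_of_forall_not_adj ?_
  · simp [hpr, hpd]
  · simp [hbp, hbr, hbd]

namespace IsTwoRegularOn

theorem degSum_eq (hreg : IsTwoRegularOn G S) : degSum G S = #S * 2 :=
  sum_const_nat hreg

variable [DecidableEq V] {a b c d : V}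

theorem ne_of_nbrIn_eq_pair (hreg : IsTwoRegularOn G S) (hv : v ∈ S) (h : nbrIn G S v = {u, w}) :
    u ≠ w :=
  card_pair_eq_two_iff.1 (h ▸ hreg v hv)

theorem exists_nbrIn_eq_pair (hreg : IsTwoRegularOn G S) (hv : v ∈ S) (hu : u ∈ S)
    (hvu : G.Adj v u) : ∃ w, nbrIn G S v = {u, w} := by
  have hmem : u ∈ nbrIn G S v := mem_nbrIn.2 ⟨hu, hvu⟩
  obtain ⟨w, hw⟩ := card_eq_one.1 (by rw [card_erase_of_mem hmem, hreg v hv] :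
    #((nbrIn G S v).erase u) = 1)
  exact ⟨w, by rw [← hw, insert_erase hmem]⟩

theorem eq_or_forall_adj_of_isNearIn (hreg : IsTwoRegularOn G S) {p : V}
    (hNa : nbrIn G S a = {b, p}) (hNb : nbrIn G S b = {a, c}) (hNc : nbrIn G S c = {b, d})
    (hnear : IsNearIn G S a d) : p = d ∨ ∀ x ∈ S, G.Adj p x → x = a ∨ x = b ∨ x = d := by
  obtain ⟨⟨ha, -⟩, hc, hbc⟩ := mem_and_adj_of_nbrIn_eq_pair hNb
  obtain ⟨-, hd, hcd⟩ := mem_and_adj_of_nbrIn_eq_pair hNc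
  obtain ⟨-, hp, hap⟩ := mem_and_adj_of_nbrIn_eq_pair hNa
  by_cases had : a = d
  · obtain rfl : c = p :=
      ((adj_iff_of_nbrIn_eq_pair hNa hc).1 (had ▸ hcd.symm)).resolve_left hbc.ne.symm
    exact .inr fun x hx hcx => .inr ((adj_iff_of_nbrIn_eq_pair hNc hx).1 hcx)
  rcases hnear.resolve_left had with had' | ⟨w, hw, haw, hwd⟩
  · exact .inl (((adj_iff_of_nbrIn_eq_pair hNa hd).1 had').resolve_left
      (hreg.ne_of_nbrIn_eq_pair hc hNc).symm).symm
  rcases (adj_iff_of_nbrIn_eq_pair hNa hw).1 haw with rfl | rfl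
  · exact (((adj_iff_of_nbrIn_eq_pair hNb hd).1 hwd).elim (Ne.symm had) hcd.ne.symm).elim
  · obtain ⟨q, hNw⟩ := hreg.exists_nbrIn_eq_pair hw ha haw.symm
    obtain rfl : d = q :=
      ((adj_iff_of_nbrIn_eq_pair hNw hd).1 hwd).resolve_left (Ne.symm had)
    exact .inr fun x hx hwx =>
      ((adj_iff_of_nbrIn_eq_pair hNw hx).1 hwx).imp_right .inr

/- Once `b` is deleted, `a` can be added to a set containing `b` and `c`, unless the set contains
both the other neighbour `p` of `a` and the neighbour of `p` other than `a`. On a cycle of length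
at most 5, one of these two is `b` or `d`. -/
theorem inter_erase_notMem_maxDissoc (hreg : IsTwoRegularOn G S) (hNb : nbrIn G S b = {a, c})
    (hNc : nbrIn G S c = {b, d}) (hnear : IsNearIn G S a d) (hT : T ∈ maxDissoc G S) (hbT : b ∈ T)
    (hcT : c ∈ T) : T ∩ S.erase b ∉ maxDissoc G (S.erase b) := by
  obtain ⟨⟨ha, hba⟩, hc, hbc⟩ := mem_and_adj_of_nbrIn_eq_pair hNb
  obtain ⟨⟨hb, -⟩, -, hcd⟩ := mem_and_adj_of_nbrIn_eq_pair hNc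
  have hTd := isDissoc_of_mem_maxDissoc hT
  have haT : a ∉ T := fun h =>
    hreg.ne_of_nbrIn_eq_pair hb hNb (hTd.eq_of_adj hbT h hcT hba hbc)
  have hdT : d ∉ T := fun h =>
    hreg.ne_of_nbrIn_eq_pair hc hNc (hTd.eq_of_adj hcT hbT h hbc.symm hcd)
  obtain ⟨p, hNa⟩ := hreg.exists_nbrIn_eq_pair ha hb hba.symm
  refine inter_notMem_maxDissoc (e := p) (mem_erase.2 ⟨hba.ne.symm, ha⟩) haT ?_ ?_
  · simp only [mem_inter, mem_erase]
    rintro x ⟨-, hxb, hxS⟩ hax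
    exact ((adj_iff_of_nbrIn_eq_pair hNa hxS).1 hax).resolve_left hxb
  · simp only [mem_inter, mem_erase]
    rintro ⟨hpT, -⟩ x ⟨hxT, hxb, hxS⟩ hpx
    rcases hreg.eq_or_forall_adj_of_isNearIn hNa hNb hNc hnear with rfl | hNp
    · exact hdT hpT
    · rcases hNp x hxS hpx with rfl | rfl | rfl
      exacts [haT hxT, hxb rfl, hdT hxT]

/- Along the path `r – q – p – a – b – c – d`, the vertices `b`, `p`, `r`, `d` keep `a`, `q` and `c`
out of every dissociation set containing them, so that `a` can be added once `b` is deleted. -/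
theorem exists_mem_maxDissoc_inter_notMem (hreg : IsTwoRegularOn G S) (hNb : nbrIn G S b = {a, c})
    (hNc : nbrIn G S c = {b, d}) (hnear : ¬ IsNearIn G S a d) :
    ∃ T ∈ maxDissoc G S, b ∈ T ∧ c ∉ T ∧
      T ∩ (S.erase b).erase c ∉ maxDissoc G ((S.erase b).erase c) := by
  obtain ⟨⟨ha, hba⟩, hc, hbc⟩ := mem_and_adj_of_nbrIn_eq_pair hNb
  obtain ⟨⟨hb, -⟩, hd, hcd⟩ := mem_and_adj_of_nbrIn_eq_pair hNc
  obtain ⟨p, hNa⟩ := hreg.exists_nbrIn_eq_pair ha hb hba.symm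
  obtain ⟨-, hp, hap⟩ := mem_and_adj_of_nbrIn_eq_pair hNa
  obtain ⟨q, hNp⟩ := hreg.exists_nbrIn_eq_pair hp ha hap.symm
  obtain ⟨-, hq, hpq⟩ := mem_and_adj_of_nbrIn_eq_pair hNp
  obtain ⟨r, hNq⟩ := hreg.exists_nbrIn_eq_pair hq hp hpq.symm
  obtain ⟨-, hr, hqr⟩ := mem_and_adj_of_nbrIn_eq_pair hNq
  obtain ⟨T, hT, hsub⟩ := exists_mem_maxDissoc_superset (S := S) (A := {b, p, r, d})
    (by simp only [insert_subset_iff, singleton_subset_iff]; exact ⟨hb, hp, hr, hd⟩)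
    (by simpa using isDissoc_of_not_isNearIn hNq hNp hNa hNb hNc hnear)
  obtain ⟨hbT, hpT, hrT, hdT⟩ : b ∈ T ∧ p ∈ T ∧ r ∈ T ∧ d ∈ T := by
    simpa only [insert_subset_iff, singleton_subset_iff] using hsub
  have hTd := isDissoc_of_mem_maxDissoc hT
  have haT : a ∉ T := fun h =>
    hreg.ne_of_nbrIn_eq_pair ha hNa (hTd.eq_of_adj h hbT hpT hba.symm hap)
  have hqT : q ∉ T := fun h =>
    hreg.ne_of_nbrIn_eq_pair hq hNq (hTd.eq_of_adj h hpT hrT hpq.symm hqr)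
  have hcT : c ∉ T := fun h =>
    hreg.ne_of_nbrIn_eq_pair hc hNc (hTd.eq_of_adj h hbT hdT hbc.symm hcd)
  have haH : a ∈ (S.erase b).erase c :=
    mem_erase.2 ⟨hreg.ne_of_nbrIn_eq_pair hb hNb, mem_erase.2 ⟨hba.ne.symm, ha⟩⟩
  refine ⟨T, hT, hbT, hcT, inter_notMem_maxDissoc (e := p) haH haT ?_ ?_⟩
  · simp only [mem_inter, mem_erase]
    rintro x ⟨-, -, hxb, hxS⟩ hax
    exact ((adj_iff_of_nbrIn_eq_pair hNa hxS).1 hax).resolve_left hxb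
  · simp only [mem_inter, mem_erase]
    rintro - x ⟨hxT, -, -, hxS⟩ hpx
    exact ((adj_iff_of_nbrIn_eq_pair hNp hxS).1 hpx).elim (fun h => haT (h ▸ hxT))
      fun h => hqT (h ▸ hxT)

theorem isNearIn_of_isNearIn (hreg : IsTwoRegularOn G S) {p : V} (hNa : nbrIn G S a = {b, p})
    (hNb : nbrIn G S b = {a, c}) (hNc : nbrIn G S c = {b, d}) (hnear : IsNearIn G S a d) :
    IsNearIn G S c p := by
  obtain ⟨-, hc, hbc⟩ := mem_and_adj_of_nbrIn_eq_pair hNb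
  obtain ⟨-, hd, hcd⟩ := mem_and_adj_of_nbrIn_eq_pair hNc
  have hc_of_eq (had : a = d) : IsNearIn G S c p :=
    .inl (((adj_iff_of_nbrIn_eq_pair hNa hc).1 (had ▸ hcd.symm)).resolve_left hbc.ne.symm)
  rcases hnear with had | had | ⟨w, hw, haw, hwd⟩
  · exact hc_of_eq had
  · obtain rfl := ((adj_iff_of_nbrIn_eq_pair hNa hd).1 had).resolve_left
      (hreg.ne_of_nbrIn_eq_pair hc hNc).symm
    exact .inr (.inl hcd)
  · rcases (adj_iff_of_nbrIn_eq_pair hNa hw).1 haw with rfl | rfl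
    · exact hc_of_eq
        (((adj_iff_of_nbrIn_eq_pair hNb hd).1 hwd).resolve_right hcd.ne.symm).symm
    · exact .inr (.inr ⟨d, hd, hcd, hwd.symm⟩)

theorem card_maxDissoc_erase_add_two_le (hreg : IsTwoRegularOn G S) (hNb : nbrIn G S b = {a, c})
    (hNc : nbrIn G S c = {b, d}) (hnear : IsNearIn G S a d) :
    #(maxDissoc G (S.erase b)) + 2 ≤ #(maxDissoc G S) := by
  obtain ⟨⟨ha, hba⟩, hc, hbc⟩ := mem_and_adj_of_nbrIn_eq_pair hNb
  obtain ⟨⟨hb, -⟩, -⟩ := mem_and_adj_of_nbrIn_eq_pair hNc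
  obtain ⟨p, hNa⟩ := hreg.exists_nbrIn_eq_pair ha hb hba.symm
  obtain ⟨T, hT, hbT, hcT⟩ := exists_mem_maxDissoc_pair (G := G) hb hc
  obtain ⟨T', hT', hbT', haT'⟩ := exists_mem_maxDissoc_pair (G := G) hb ha
  have hne : T ≠ T' := by
    rintro rfl
    exact hreg.ne_of_nbrIn_eq_pair hb hNb
      ((isDissoc_of_mem_maxDissoc hT).eq_of_adj hbT haT' hcT hba hbc)
  rw [← card_pair hne]
  refine card_maxDissoc_add_card_le_of_inter_notMem (erase_subset b S) ?_
  simp only [mem_insert, mem_singleton, forall_eq_or_imp, forall_eq]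
  exact ⟨⟨hT, hreg.inter_erase_notMem_maxDissoc hNb hNc hnear hT hbT hcT⟩, hT',
    hreg.inter_erase_notMem_maxDissoc (hNb.trans (pair_comm a c)) hNa
      (hreg.isNearIn_of_isNearIn hNa hNb hNc hnear) hT' hbT' haT'⟩

theorem card_maxDissoc_erase_erase_add_two_le (hreg : IsTwoRegularOn G S)
    (hNb : nbrIn G S b = {a, c}) (hNc : nbrIn G S c = {b, d}) (hnear : ¬ IsNearIn G S a d) :
    #(maxDissoc G ((S.erase b).erase c)) + 2 ≤ #(maxDissoc G S) := by
  obtain ⟨T, hT, -, hcT, hTH⟩ := hreg.exists_mem_maxDissoc_inter_notMem hNb hNc hnear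
  obtain ⟨T', hT', hcT', -, hTH'⟩ := hreg.exists_mem_maxDissoc_inter_notMem
    (hNc.trans (pair_comm b d)) (hNb.trans (pair_comm a c)) fun h => hnear h.symm
  have hne : T ≠ T' := fun h => hcT (h ▸ hcT')
  rw [erase_right_comm] at hTH'
  rw [← card_pair hne]
  refine card_maxDissoc_add_card_le_of_inter_notMem
    ((erase_subset _ _).trans (erase_subset _ _)) ?_
  simp only [mem_insert, mem_singleton, forall_eq_or_imp, forall_eq]
  exact ⟨⟨hT, hTH⟩, hT', hTH'⟩

theorem five_le_card_of_not_isNearIn (hreg : IsTwoRegularOn G S) (hNb : nbrIn G S b = {a, c})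
    (hNc : nbrIn G S c = {b, d}) (hnear : ¬ IsNearIn G S a d) : 5 ≤ #S := by
  obtain ⟨⟨ha, hba⟩, hc, hbc⟩ := mem_and_adj_of_nbrIn_eq_pair hNb
  obtain ⟨⟨hb, -⟩, hd, hcd⟩ := mem_and_adj_of_nbrIn_eq_pair hNc
  obtain ⟨p, hNa⟩ := hreg.exists_nbrIn_eq_pair ha hb hba.symm
  obtain ⟨-, hp, hap⟩ := mem_and_adj_of_nbrIn_eq_pair hNa
  have had : a ≠ d := fun h => hnear (.inl h)
  have hpd : p ≠ d := fun h => hnear (.inr (.inl (h ▸ hap)))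
  have hpc : p ≠ c := fun h =>
    hnear (.inr (.inr ⟨c, hc, h ▸ hap, hcd⟩))
  have hcard : #{p, a, b, c, d} = 5 := by
    simp [*, hap.ne.symm, hba.ne.symm, hbc.ne, hcd.ne, (hreg.ne_of_nbrIn_eq_pair ha hNa).symm,
      hreg.ne_of_nbrIn_eq_pair hb hNb, hreg.ne_of_nbrIn_eq_pair hc hNc]
  rw [← hcard]
  exact card_le_card (by simp [insert_subset_iff, *])

theorem edgeBound_of_isNearIn (hreg : IsTwoRegularOn G S) (hNb : nbrIn G S b = {a, c})
    (hNc : nbrIn G S c = {b, d}) (hnear : IsNearIn G S a d) (h : EdgeBound G (S.erase b)) :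
    EdgeBound G S := by
  intro _
  have hb : b ∈ S := (mem_and_adj_of_nbrIn_eq_pair hNc).1.1
  have hdegS := hreg.degSum_eq
  have hdegb := degSum_eq_degSum_erase_add (G := G) hb
  have hcard := card_erase_add_one hb
  rw [hreg b hb] at hdegb
  by_cases hH : #(S.erase b) < degSum G (S.erase b)
  · have := h hH
    have := hreg.card_maxDissoc_erase_add_two_le hNb hNc hnear
    omega
  · have := card_nbrIn_lt_card_maxDissoc hb (hreg b hb).ge
    have := hreg b hb
    omega

theorem edgeBound_of_not_isNearIn (hreg : IsTwoRegularOn G S) (hNb : nbrIn G S b = {a, c})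
    (hNc : nbrIn G S c = {b, d}) (hnear : ¬ IsNearIn G S a d)
    (h : EdgeBound G ((S.erase b).erase c)) : EdgeBound G S := by
  intro _
  have hc : c ∈ S := (mem_and_adj_of_nbrIn_eq_pair hNb).2.1
  obtain ⟨⟨hb, hcb⟩, -⟩ := mem_and_adj_of_nbrIn_eq_pair hNc
  have hc' : c ∈ S.erase b := mem_erase.2 ⟨hcb.ne, hc⟩
  have hnbr : #(nbrIn G (S.erase b) c) = 1 := by
    rw [nbrIn_erase, card_erase_of_mem (mem_nbrIn.2 ⟨hb, hcb⟩), hreg c hc]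
  have hdegS := hreg.degSum_eq
  have hdegb := degSum_eq_degSum_erase_add (G := G) hb
  have hdegc := degSum_eq_degSum_erase_add (G := G) hc'
  have hcardb := card_erase_add_one hb
  have hcardc := card_erase_add_one hc'
  rw [hreg b hb] at hdegb
  rw [hnbr] at hdegc
  have hfive := hreg.five_le_card_of_not_isNearIn hNb hNc hnear
  have := hreg.card_maxDissoc_erase_erase_add_two_le hNb hNc hnear
  have := h (by omega)
  omega

end IsTwoRegularOn

theorem IsTwoRegularOn.edgeBound (hreg : IsTwoRegularOn G S) (ih : ∀ H ⊂ S, EdgeBound G H) :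
    EdgeBound G S := by
  classical
  rcases S.eq_empty_or_nonempty with rfl | ⟨b, hb⟩
  · simp [EdgeBound, degSum]
  obtain ⟨a, c, -, hNb⟩ := card_eq_two.1 (hreg b hb)
  obtain ⟨-, hc, hbc⟩ := mem_and_adj_of_nbrIn_eq_pair hNb
  obtain ⟨d, hNc⟩ := hreg.exists_nbrIn_eq_pair hc hb hbc.symm
  have hsub : S.erase b ⊂ S := erase_ssubset hb
  by_cases hnear : IsNearIn G S a d
  · exact hreg.edgeBound_of_isNearIn hNb hNc hnear (ih _ hsub)
  · exact hreg.edgeBound_of_not_isNearIn hNb hNc hnear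
      (ih _ ((erase_subset _ _).trans_ssubset hsub))

/-! ### Pseudoforests -/

/-- A pseudoforest: a graph in which every finite set of vertices spans at most as many edges as
vertices, or equivalently every connected component has at most one cycle. -/
def IsPseudoforest (G : SimpleGraph V) : Prop :=
  ∀ S : Finset V, degSum G S ≤ 2 * #S

theorem isTwoRegularOn_of_two_le (hdeg : degSum G S ≤ 2 * #S)
    (hmin : ∀ v ∈ S, 2 ≤ #(nbrIn G S v)) : IsTwoRegularOn G S := by
  have hsum : ∑ _v ∈ S, 2 = ∑ v ∈ S, #(nbrIn G S v) := by
    refine le_antisymm (sum_le_sum hmin) ?_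
    rwa [sum_const, smul_eq_mul, mul_comm]
  exact fun v hv => ((sum_eq_sum_iff_of_le hmin).1 hsum v hv).symm

theorem IsPseudoforest.edgeBound (hG : IsPseudoforest G) (S : Finset V) : EdgeBound G S := by
  classical
  induction S using Finset.strongInduction with
  | H S ih =>
    by_cases hmin : ∀ v ∈ S, 2 ≤ #(nbrIn G S v)
    · exact (isTwoRegularOn_of_two_le (hG S) hmin).edgeBound ih
    push Not at hmin
    obtain ⟨v, hv, hlt⟩ := hmin
    have hsub : S.erase v ⊂ S := erase_ssubset hv
    obtain hiso | hone : #(nbrIn G S v) = 0 ∨ #(nbrIn G S v) = 1 := by omega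
    · exact .of_erase_isolated hv hiso (ih _ hsub)
    · obtain ⟨u, hleaf⟩ := card_eq_one.1 hone
      exact .of_erase_leaf hv hleaf (ih _ ((erase_subset _ _).trans_ssubset hsub))

section Fintype

variable [Fintype V]

theorem degSum_univ : degSum G univ = 2 * G.edgeSet.ncard := by
  classical
  rw [← coe_edgeFinset, Set.ncard_coe_finset, ← sum_degrees_eq_twice_card_edges, degSum]
  refine sum_congr rfl fun v _ => ?_
  rw [← card_neighborFinset_eq_degree]
  congr 1
  ext
  simp [mem_nbrIn]

theorem phi_eq_card_maxDissoc : phi G = #(maxDissoc G univ) := by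
  classical
  rw [phi, ← Set.ncard_coe_finset, ← Set.ncard_image_of_injective _ Finset.coe_injective]
  congr 1
  ext S
  simp only [Set.mem_ofPred_eq, Set.mem_image, mem_coe, mem_maxDissoc]
  constructor
  · rintro ⟨hS, hmax⟩
    refine ⟨S.toFinset, ⟨⟨subset_univ _, by simpa using hS⟩, fun B hB hSB => ?_⟩, by simp⟩
    simp [hmax B hB.2 (by simpa using coe_subset.2 hSB)]
  · rintro ⟨T, hT, rfl⟩
    refine ⟨hT.prop.2, fun B hB hTB => ?_⟩
    rw [hT.eq_of_le (y := B.toFinset) ⟨subset_univ _, by simpa using hB⟩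
      (by simpa [← coe_subset] using hTB), Set.coe_toFinset]

theorem degSum_add_le_degSum_univ_add (hG : G.Connected) (hS : S.Nonempty) :
    degSum G S + 2 * Fintype.card V ≤ degSum G univ + 2 * #S := by
  classical
  induction hk : Fintype.card V - #S generalizing S with
  | zero =>
    rw [(card_eq_iff_eq_univ S).1 (le_antisymm (card_le_univ S) (by omega)), card_univ]
  | succ k ih =>
    obtain ⟨s, hs⟩ := hS
    obtain ⟨t, ht⟩ : ∃ t, t ∉ S := by
      by_contra! h
      simp [eq_univ_of_forall h] at hk
    obtain ⟨p⟩ := hG.preconnected s t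
    obtain ⟨e, -, heS, he⟩ := p.exists_boundary_dart (S : Set V) hs ht
    have he : e.snd ∉ S := he
    have hcard := card_insert_of_notMem he
    have hih := ih (S := insert e.snd S) (insert_nonempty _ _) (by omega)
    have hdeg := degSum_eq_degSum_erase_add (G := G) (mem_insert_self e.snd S)
    rw [erase_insert he] at hdeg
    have hpos : 0 < #(nbrIn G (insert e.snd S) e.snd) :=
      card_pos.2 ⟨e.fst, mem_nbrIn.2 ⟨mem_insert_of_mem heS, e.adj.symm⟩⟩
    omega

theorem IsUnicyclic.isPseudoforest (hG : IsUnicyclic G) : IsPseudoforest G := by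
  intro S
  rcases S.eq_empty_or_nonempty with rfl | hS
  · simp [degSum]
  · have hdeg := degSum_add_le_degSum_univ_add hG.1 hS
    rw [degSum_univ, hG.2] at hdeg
    omega

end Fintype

end InducedSubgraph

theorem stmt0_general {V : Type*} [Fintype V] (G : SimpleGraph V) (hG : IsPseudoforest G)
    (hE : Fintype.card V < 2 * G.edgeSet.ncard) :
    G.edgeSet.ncard + 2 ≤ phi G + (Fintype.card V + 1) / 2 := by
  have hbound := hG.edgeBound Finset.univ
  rw [EdgeBound, degSum_univ, Finset.card_univ, ← phi_eq_card_maxDissoc] at hbound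
  have := hbound hE
  omega

/-- every unicyclic graph of order `n ≥ 3` has at least `⌊n/2⌋ + 2`
maximal dissociation sets. -/
theorem stmt0 {V : Type*} [Fintype V] (G : SimpleGraph V) (n : ℕ) (hn : 3 ≤ n)
    (hcard : Fintype.card V = n) (hG : IsUnicyclic G) :
    n / 2 + 2 ≤ phi G := by
  have h := stmt0_general G hG.isPseudoforest (by rw [hG.2]; omega)
  rw [hG.2, hcard] at h
  omega
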